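/- arXiv:1004.3510 — 2 statements merged into one kernel-verified Lean document; each statement's English description precedes it below -/
import Mathlib

section
/- Let ω, ω' ∈ {1,…,m}^ℕ be sequences in which each symbol k has positive limit frequencies P_k and Q_k respectively, and let χ : ℕ → ℕ be the bijection matching the position of the n-th appearance of each symbol k in ω to the position of its n-th appearance in ω'. Let p > 0 be a lower bound for all P_k and Q_k. Then there exist a constant K_0 > 0 depending only on p, a constant δ_0 > 0, and a sequence ε(n) → 0 (depending on ω, ω'), such that whenever δ = max_k |P_k − Q_k| ≤ δ_0, for every n ≥ 1: (i) max χ({1,…,n}) ≤ n(1 + K_0 ε(n) + K_0 δ), and (ii) {1, …, ⌊n(1 − K_0 ε(n) − K_0 δ)⌋} ⊆ χ({1,…,n}). -/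
/-!
Write `c k n` and `c' k n` for the number of occurrences of `k` among the first `n` terms of
`ω` and `ω'`. The permutation `χ` satisfies `ω' (χ l) = ω l` and
`c' k (χ l + 1) = c k (l + 1)` with `k = ω l` (`chi_spec`). Once `n` is large, `c k n` and
`c' k n` lie between `n (P k ∓ η)` and `n (Q k ∓ η)` (`freq_bounds`), so equality of the two
counts forces the ratio of `χ l + 1` and `l + 1` to be at most `(P k + η) / (Q k - η)`, and
symmetrically. Since `P k, Q k ≥ p`, this is within `(4 / p) (η + δ)` of `1` when `η ≤ p / 2`;
hence `K₀ = 4 / p`, and both bounds hold with error `η` for all large `n`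
(`eventually_good`). For each single `n` they hold trivially with a large enough error.
As the bounds are monotone in the error, the infimum of the admissible errors, plus `1 / (n + 1)`,
is a sequence tending to `0` (`exists_error_seq`).
-/

open Filter

/-- The symbol `k` has limit frequency `P` in the sequence `ω` if
`(1/n) #{l < n : ω l = k} → P` as `n → ∞`. -/
def HasLimitFreq {m : ℕ} (ω : ℕ → Fin m) (k : Fin m) (P : ℝ) : Prop :=
  Tendsto (fun n : ℕ => (((Finset.range n).filter fun l => ω l = k).card : ℝ) / n)
    atTop (nhds P)

/-- `NthAppear ω k n l` : the (0-indexed) position `l` is the place of the `n`-th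
appearance (`n ≥ 1`) of the symbol `k` in the sequence `ω`. -/
def NthAppear {m : ℕ} (ω : ℕ → Fin m) (k : Fin m) (n l : ℕ) : Prop :=
  ω l = k ∧ ((Finset.range (l + 1)).filter fun t => ω t = k).card = n

/-- The number of occurrences of `k` among the first `n` terms of `ω`. -/
def cnt {m : ℕ} (ω : ℕ → Fin m) (k : Fin m) (n : ℕ) : ℕ :=
  ((Finset.range n).filter fun t => ω t = k).card

lemma cnt_succ {m : ℕ} (ω : ℕ → Fin m) (k : Fin m) (n : ℕ) :
    cnt ω k (n + 1) = cnt ω k n + if ω n = k then 1 else 0 := by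
  unfold cnt
  rw [Finset.range_add_one, Finset.filter_insert]
  split_ifs <;> simp

lemma cnt_mono {m : ℕ} (ω : ℕ → Fin m) (k : Fin m) : Monotone (cnt ω k) :=
  monotone_nat_of_le_succ fun n => by rw [cnt_succ]; omega

lemma cnt_le {m : ℕ} (ω : ℕ → Fin m) (k : Fin m) (n : ℕ) : cnt ω k n ≤ n := by
  simpa [cnt] using Finset.card_filter_le (Finset.range n) (fun t => ω t = k)

lemma freq_bounds {m : ℕ} {ω : ℕ → Fin m} {P : Fin m → ℝ}
    (h : ∀ k, HasLimitFreq ω k (P k)) {η : ℝ} (hη : 0 < η) :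
    ∀ᶠ n : ℕ in atTop, ∀ k, n * (P k - η) ≤ cnt ω k n ∧ (cnt ω k n : ℝ) ≤ n * (P k + η) := by
  rw [eventually_all]
  intro k
  filter_upwards [(Metric.tendsto_nhds.1 (h k)) η hη, eventually_ge_atTop 1] with n hn h1
  have hn0 : (0 : ℝ) < n := by exact_mod_cast h1
  have hn' : |(cnt ω k n : ℝ) / n - P k| < η := hn
  obtain ⟨ha, hb⟩ := abs_lt.1 hn'
  have e : (cnt ω k n : ℝ) = n * ((cnt ω k n : ℝ) / n) := by field_simp
  constructor
  · rw [e]; gcongr; linarith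
  · rw [e]; gcongr; linarith

/-- A symbol of positive limit frequency appears at least `j` times, for every `j`. -/
lemma exists_nthAppear {m : ℕ} {ω : ℕ → Fin m} {Q : Fin m → ℝ}
    (h : ∀ k, HasLimitFreq ω k (Q k)) (k : Fin m) (hQ : 0 < Q k) (j : ℕ) (hj : 1 ≤ j) :
    ∃ l, NthAppear ω k j l := by
  classical
  have ex : ∃ n, j ≤ cnt ω k n := by
    obtain ⟨n, hn, h2⟩ := ((freq_bounds h (half_pos hQ)).and
      (eventually_ge_atTop ⌈j / (Q k / 2)⌉₊)).exists
    refine ⟨n, ?_⟩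
    have h3 : (j : ℝ) / (Q k / 2) ≤ n := Nat.ceil_le.1 h2
    rw [div_le_iff₀ (half_pos hQ)] at h3
    have h4 := (hn k).1
    have : (j : ℝ) ≤ cnt ω k n := by linarith
    exact_mod_cast this
  -- the appearance sought is the step at which the count first reaches `j`
  have hs := Nat.find_spec ex
  obtain ⟨s, hs'⟩ : ∃ s, Nat.find ex = s + 1 := by
    refine Nat.exists_eq_succ_of_ne_zero fun h0 => ?_
    rw [h0] at hs
    simp [cnt] at hs
    omega
  have hlt := Nat.find_min ex (m := s) (by omega)
  rw [hs', cnt_succ] at hs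
  have hk : ω s = k := by
    by_contra hne
    rw [if_neg hne] at hs
    omega
  refine ⟨s, hk, ?_⟩
  change cnt ω k (s + 1) = j
  rw [cnt_succ]
  rw [if_pos hk] at hs ⊢
  omega

lemma chi_spec {m : ℕ} {ω ω' : ℕ → Fin m} {Q : Fin m → ℝ}
    (h : ∀ k, HasLimitFreq ω' k (Q k)) (hQ : ∀ k, 0 < Q k) {χ : ℕ → ℕ}
    (hχ : ∀ (k : Fin m) (n l₁ l₂ : ℕ),
      NthAppear ω k n l₁ → NthAppear ω' k n l₂ → χ l₁ = l₂) (l : ℕ) :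
    cnt ω' (ω l) (χ l + 1) = cnt ω (ω l) (l + 1) := by
  have h1 : 1 ≤ cnt ω (ω l) (l + 1) := by rw [cnt_succ, if_pos rfl]; omega
  obtain ⟨l', hl'⟩ := exists_nthAppear h (ω l) (hQ _) _ h1
  rw [hχ (ω l) _ l l' ⟨rfl, rfl⟩ hl']
  exact hl'.2

/-- The two bounds of the theorem at index `n`, with error term `η` and constant `K`,
for every `δ` bounding the differences of the frequencies. -/
def Good {m : ℕ} (P Q : Fin m → ℝ) (χ : ℕ → ℕ) (K : ℝ) (n : ℕ) (η : ℝ) : Prop :=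
  ∀ δ : ℝ, 0 ≤ δ → (∀ k, |P k - Q k| ≤ δ) →
    (∀ l ∈ (Finset.range n).image χ, ((l : ℝ) + 1) ≤ n * (1 + K * η + K * δ)) ∧
    (∀ l : ℕ, ((l : ℝ) + 1) ≤ n * (1 - K * η - K * δ) → l ∈ (Finset.range n).image χ)

lemma Good.mono {m : ℕ} {P Q : Fin m → ℝ} {χ : ℕ → ℕ} {K : ℝ} (hK : 0 < K) {n : ℕ} {a b : ℝ}
    (hab : a ≤ b) (h : Good P Q χ K n a) : Good P Q χ K n b := by
  intro δ h0 hδ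
  obtain ⟨h1, h2⟩ := h δ h0 hδ
  refine ⟨fun l hl => (h1 l hl).trans ?_, fun l hl => h2 l (hl.trans ?_)⟩ <;> gcongr

lemma exists_good {m : ℕ} (P Q : Fin m → ℝ) (χ : ℕ → ℕ) {K : ℝ} (hK : 0 < K) (n : ℕ)
    (hn : 1 ≤ n) : ∃ η, 0 ≤ η ∧ Good P Q χ K n η := by
  -- an error of at least `1 / K` makes the second bound vacuous
  refine ⟨(((Finset.range n).sup χ : ℕ) + 1) / K, by positivity, fun δ h0 _ => ?_⟩
  have hn' : (1 : ℝ) ≤ n := by exact_mod_cast hn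
  have hM : (0 : ℝ) ≤ ((Finset.range n).sup χ : ℕ) := Nat.cast_nonneg _
  have hKδ : 0 ≤ K * δ := by positivity
  rw [mul_div_cancel₀ _ hK.ne']
  constructor
  · intro l hl
    obtain ⟨i, hi, rfl⟩ := Finset.mem_image.1 hl
    have : (χ i : ℝ) ≤ ((Finset.range n).sup χ : ℕ) := by
      exact_mod_cast Finset.le_sup (f := χ) hi
    nlinarith
  · intro l hl
    have : (0 : ℝ) ≤ l := Nat.cast_nonneg l
    nlinarith

lemma eventually_good {m : ℕ} {ω ω' : ℕ → Fin m} {P Q : Fin m → ℝ} {p : ℝ} (hp : 0 < p)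
    (hω : ∀ k, HasLimitFreq ω k (P k)) (hω' : ∀ k, HasLimitFreq ω' k (Q k))
    (hP : ∀ k, p ≤ P k) (hQ : ∀ k, p ≤ Q k) {χ : ℕ → ℕ} (hbij : Function.Bijective χ)
    (hχ : ∀ (k : Fin m) (n l₁ l₂ : ℕ),
      NthAppear ω k n l₁ → NthAppear ω' k n l₂ → χ l₁ = l₂)
    {η : ℝ} (hη : 0 < η) (hηp : η ≤ p / 2) :
    ∀ᶠ n : ℕ in atTop, Good P Q χ (4 / p) n η := by
  obtain ⟨N, hN⟩ := eventually_atTop.1 (freq_bounds hω' hη)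
  have hspec := chi_spec hω' (fun k => hp.trans_le (hQ k)) hχ
  -- `n` exceeds `2 N / p` so that the first `n` terms of `ω` contain every symbol `N` times
  filter_upwards [freq_bounds hω hη, eventually_ge_atTop N,
    eventually_ge_atTop ⌈(N : ℝ) / (p / 2)⌉₊] with n hn hnN hnp δ h0 hδ
  have hnp' : (N : ℝ) ≤ n * (p / 2) := by
    have := Nat.ceil_le.1 hnp
    rwa [div_le_iff₀ (half_pos hp)] at this
  have hn0 : (0 : ℝ) ≤ n := Nat.cast_nonneg n
  have hKpos : 0 < 4 / p := by positivity
  have hs : 0 < η + δ := by linarith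
  constructor
  · intro l' hl'
    obtain ⟨l, hl, rfl⟩ := Finset.mem_image.1 hl'
    have hln := Finset.mem_range.1 hl
    rcases lt_or_ge (χ l + 1) N with hlt | hge
    · have h1 : ((χ l : ℝ) + 1) ≤ n := by exact_mod_cast (hlt.le.trans hnN)
      have h2 : 0 ≤ (n : ℝ) * (4 / p * η + 4 / p * δ) := by positivity
      linarith
    · have h1 := (hN _ hge (ω l)).1
      have h2 := (hn (ω l)).2
      have h3 : (cnt ω' (ω l) (χ l + 1) : ℝ) ≤ cnt ω (ω l) n := by
        rw [hspec]
        exact_mod_cast cnt_mono ω (ω l) hln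
      have hd := (abs_le.1 (hδ (ω l))).2
      have hq := hQ (ω l)
      push_cast at h1
      have h4 : p / 2 ≤ Q (ω l) - η := by linarith
      refine le_of_mul_le_mul_right ?_ (lt_of_lt_of_le (half_pos hp) h4)
      have h5 : 2 * (η + δ) ≤ 4 / p * (η + δ) * (Q (ω l) - η) := by
        calc 2 * (η + δ) = 4 / p * (η + δ) * (p / 2) := by field_simp; ring
          _ ≤ _ := by gcongr
      calc ((χ l : ℝ) + 1) * (Q (ω l) - η) ≤ n * (P (ω l) + η) := by linarith
        _ ≤ n * ((Q (ω l) - η) + 4 / p * (η + δ) * (Q (ω l) - η)) :=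
          mul_le_mul_of_nonneg_left (by linarith) hn0
        _ = _ := by ring
  · intro l' hl'
    obtain ⟨l, rfl⟩ := hbij.2 l'
    refine Finset.mem_image_of_mem _ (Finset.mem_range.2 ?_)
    by_contra hnl
    have hnl : n ≤ l := not_lt.1 hnl
    have h1 := (hn (ω l)).1
    have h3 : (cnt ω (ω l) n : ℝ) + 1 ≤ cnt ω' (ω l) (χ l + 1) := by
      rw [hspec, cnt_succ, if_pos rfl]
      exact_mod_cast Nat.add_le_add_right (cnt_mono ω (ω l) hnl) 1
    have hpp := hP (ω l)
    have hq := hQ (ω l)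
    rcases lt_or_ge (χ l + 1) N with hlt | hge
    · have h4 : (cnt ω' (ω l) (χ l + 1) : ℝ) ≤ N := by
        exact_mod_cast (cnt_le ω' (ω l) _).trans hlt.le
      have h5 : (n : ℝ) * (p / 2) ≤ n * (P (ω l) - η) := by gcongr; linarith
      linarith
    · have h2 := (hN _ hge (ω l)).2
      push_cast at h2
      have hd := (abs_le.1 (hδ (ω l))).1
      have h5 : 4 * (η + δ) ≤ 4 / p * (η + δ) * (Q (ω l) + η) := by
        calc 4 * (η + δ) = 4 / p * (η + δ) * p := by field_simp
          _ ≤ _ := by gcongr; linarith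
      have h6 : ((χ l : ℝ) + 1) * (Q (ω l) + η) ≤ n * (P (ω l) - η) :=
        calc ((χ l : ℝ) + 1) * (Q (ω l) + η)
            ≤ n * (1 - 4 / p * η - 4 / p * δ) * (Q (ω l) + η) := by
              gcongr; linarith
          _ = n * ((Q (ω l) + η) - 4 / p * (η + δ) * (Q (ω l) + η)) := by ring
          _ ≤ _ := mul_le_mul_of_nonneg_left (by linarith) hn0
      linarith

/-- A property monotone in the error, which for each index holds for some error, and which
for each positive error holds at all large indices, holds along an error sequence tending
to `0`. -/
lemma exists_error_seq {G : ℕ → ℝ → Prop} (mono : ∀ n a b, a ≤ b → G n a → G n b)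
    (ex : ∀ n, ∃ a, 0 ≤ a ∧ G n a) (ev : ∀ η, 0 < η → ∀ᶠ n in atTop, G n η) :
    ∃ ε : ℕ → ℝ, (∀ n, 0 ≤ ε n) ∧ Tendsto ε atTop (nhds 0) ∧ ∀ n, G n (ε n) := by
  set S : ℕ → Set ℝ := fun n => {a | 0 ≤ a ∧ G n a}
  have hbdd : ∀ n, BddBelow (S n) := fun n => ⟨0, fun a ha => ha.1⟩
  have hS0 : ∀ n, 0 ≤ sInf (S n) := fun n => Real.sInf_nonneg fun a ha => ha.1
  -- the infimum itself need not be admissible; the positive summand ensures admissibility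
  refine ⟨fun n => sInf (S n) + 1 / ((n : ℝ) + 1), fun n => add_nonneg (hS0 n) (by positivity),
    ?_, fun n => ?_⟩
  · rw [← add_zero (0 : ℝ)]
    refine Tendsto.add ?_ tendsto_one_div_add_atTop_nhds_zero_nat
    rw [Metric.tendsto_nhds]
    intro η hη
    filter_upwards [ev (η / 2) (half_pos hη)] with n hn
    rw [Real.dist_eq, sub_zero, abs_of_nonneg (hS0 n)]
    exact (csInf_le (hbdd n) ⟨(half_pos hη).le, hn⟩).trans_lt (half_lt_self hη)
  · have hpos : (0 : ℝ) < 1 / ((n : ℝ) + 1) := by positivity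
    obtain ⟨a, ha, hlt⟩ := exists_lt_of_csInf_lt (ex n) (lt_add_of_pos_right (sInf (S n)) hpos)
    exact mono n a _ hlt.le ha.2

/-- Let `ω, ω'` be sequences in which each symbol `k` has positive limit
frequencies `P k`, `Q k` respectively, bounded below by `p > 0`, and let `χ` be the
bijection matching the `n`-th appearance of each symbol `k` in `ω` to its `n`-th
appearance in `ω'`.  Then there are a constant `K₀ > 0` depending only on `p`, a constant
`δ₀ > 0`, and a sequence `ε n → 0` (depending on `ω, ω'`) such that whenever
`δ = max_k |P k − Q k| ≤ δ₀`, for every `n ≥ 1`: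
(i) every element of `χ({first n positions})` has (1-indexed) value at most
`n (1 + K₀ ε n + K₀ δ)`, and
(ii) every position of (1-indexed) value at most `n (1 − K₀ ε n − K₀ δ)` belongs to
`χ({first n positions})`. -/
theorem statement9 (p : ℝ) (hp : 0 < p) :
    ∃ K₀ : ℝ, 0 < K₀ ∧ ∃ δ₀ : ℝ, 0 < δ₀ ∧
      ∀ (m : ℕ) (ω ω' : ℕ → Fin m) (P Q : Fin m → ℝ),
        (∀ k, HasLimitFreq ω k (P k)) → (∀ k, HasLimitFreq ω' k (Q k)) →
        (∀ k, p ≤ P k) → (∀ k, p ≤ Q k) →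
        ∀ χ : ℕ → ℕ, Function.Bijective χ →
          (∀ (k : Fin m) (n l₁ l₂ : ℕ),
            NthAppear ω k n l₁ → NthAppear ω' k n l₂ → χ l₁ = l₂) →
          ∃ ε : ℕ → ℝ, (∀ n, 0 ≤ ε n) ∧ Tendsto ε atTop (nhds 0) ∧
            ∀ δ : ℝ, 0 ≤ δ → δ ≤ δ₀ → (∀ k, |P k - Q k| ≤ δ) →
              ∀ n : ℕ, 1 ≤ n →
                (∀ l ∈ (Finset.range n).image χ,
                  ((l : ℝ) + 1) ≤ n * (1 + K₀ * ε n + K₀ * δ)) ∧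
                (∀ l : ℕ, ((l : ℝ) + 1) ≤ n * (1 - K₀ * ε n - K₀ * δ) →
                  l ∈ (Finset.range n).image χ) := by
  have hK : 0 < 4 / p := by positivity
  -- no smallness of `δ` is needed, so any `δ₀` works
  refine ⟨4 / p, hK, 1, one_pos, ?_⟩
  intro m ω ω' P Q hω hω' hP hQ χ hbij hχ
  obtain ⟨ε, h0, hlim, hG⟩ := exists_error_seq
    (G := fun n a => 1 ≤ n → Good P Q χ (4 / p) n a)
    (fun n a b hab h hn => (h hn).mono hK hab)
    (fun n => by
      by_cases hn : 1 ≤ n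
      · obtain ⟨a, ha, h⟩ := exists_good P Q χ hK n hn
        exact ⟨a, ha, fun _ => h⟩
      · exact ⟨0, le_rfl, fun h => absurd h hn⟩)
    (fun η hη => by
      filter_upwards [eventually_good hp hω hω' hP hQ hbij hχ
        (lt_min hη (half_pos hp)) (min_le_right _ _)] with n hn _
      exact hn.mono hK (min_le_left _ _))
  exact ⟨ε, h0, hlim, fun δ hδ0 _ hδ n hn => hG n hn δ hδ0 hδ⟩
end

section
/- Let 𝓕_1, …, 𝓕_m be Lalley–Gatzouras schemes. If ω and ω' are two periodic sequences in {1,…,m}^ℕ that have the same limit frequencies (Q_1,…,Q_m), all positive, then the limit sets satisfy dim_H Λ_ω = dim_H Λ_{ω'}. Consequently, for every positive rational probability vector Q, the quantity 𝓛(Q) = dim_H Λ_{ω(Q)} is well defined, independent of the choice of periodic sequence ω(Q) with frequencies Q. -/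
/-!
The two limit sets are compared directly, through coverings by approximate squares; no formula
for the dimension is used.

Let `T` be a common period of `ω` and `ω'`. Equal frequencies mean that every index occurs equally
often in a block of length `T` of either sequence, so there is a permutation `σ` of `ℕ` preserving
these blocks with `ω ∘ σ = ω'` (`exists_perm`). Precomposition with `σ` is a bijection between the
symbolic spaces. It changes widths and heights of approximate squares only by factors bounded below
and above, because products over whole blocks are unchanged: two codes in one approximate square
of scale `r` for `ω` are sent to points of the second limit set at distance `O(r)`
(`LGCode.dist_point_perm`).

Conversely, a set `U` of diameter at most `r` meets the projections of boundedly many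
approximate squares of scale `r`. These are rectangles with sides in `(α r, r]` and disjoint
interiors, even though the schemes may have touching images; hence two of them whose corners fall
in the same cell of a grid of mesh `α r` coincide (`LGCode.same_square`).

Thus every cover of the first limit set yields a cover of the second with diameters and
multiplicity comparable (`dimH_le_of_classes`), which gives one inequality between the dimensions.
The other one follows by exchanging `ω` and `ω'` and replacing `σ` by its inverse. That the limit
sets are the images of the coding maps is `LGCode.limitSet_eq`.
-/

open Filter Metric Finset

/-- A **Lalley–Gatzouras scheme** on `[0,1]²`: a finite family of affine maps
`f (i,j) (x,y) = (a i j * x + c i j, b i * y + d i)` indexed by an alphabet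
`{(i,j) : i < m₁, j < m₂ i}`, where the contraction in the horizontal direction is at
least as strong as in the vertical one (`a i j ≤ b i`), and consecutive images of the unit
square are stacked inside `[0,1]²` in increasing order without overlapping. -/
structure LGScheme where
  m₁ : ℕ
  hm₁ : 0 < m₁
  m₂ : Fin m₁ → ℕ
  hm₂ : ∀ i, 0 < m₂ i
  a : (i : Fin m₁) → Fin (m₂ i) → ℝ
  b : Fin m₁ → ℝ
  c : (i : Fin m₁) → Fin (m₂ i) → ℝ
  d : Fin m₁ → ℝ
  ha_pos : ∀ i j, 0 < a i j
  hab : ∀ i j, a i j ≤ b i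
  hb_lt_one : ∀ i, b i < 1
  hc_first : ∀ i, 0 ≤ c i ⟨0, hm₂ i⟩
  hc_step : ∀ (i : Fin m₁) (j : Fin (m₂ i)) (h : (j : ℕ) + 1 < m₂ i),
    a i j + c i j ≤ c i ⟨(j : ℕ) + 1, h⟩
  hc_last : ∀ i, c i ⟨m₂ i - 1, Nat.sub_lt (hm₂ i) Nat.one_pos⟩ ≤
    1 - a i ⟨m₂ i - 1, Nat.sub_lt (hm₂ i) Nat.one_pos⟩
  hd_first : 0 ≤ d ⟨0, hm₁⟩
  hd_step : ∀ (i : Fin m₁) (h : (i : ℕ) + 1 < m₁), b i + d i ≤ d ⟨(i : ℕ) + 1, h⟩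
  hd_last : d ⟨m₁ - 1, Nat.sub_lt hm₁ Nat.one_pos⟩ ≤ 1 - b ⟨m₁ - 1, Nat.sub_lt hm₁ Nat.one_pos⟩

namespace LGScheme

/-- The alphabet (set of symbols `(i,j)`) of a Lalley–Gatzouras scheme. -/
def Sym (S : LGScheme) : Type := (i : Fin S.m₁) × Fin (S.m₂ i)

/-- The affine map `f (i,j) (x,y) = (a i j * x + c i j, b i * y + d i)` of the scheme
associated to the symbol `s = (i,j)`. -/
def toMap (S : LGScheme) (s : S.Sym) : ℝ × ℝ → ℝ × ℝ :=
  fun p => (S.a s.1 s.2 * p.1 + S.c s.1 s.2, S.b s.1 * p.2 + S.d s.1)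

/-- The Hutchinson operator of the scheme: `A ↦ ⋃_{(i,j)} f (i,j) '' A`. -/
def hutch (S : LGScheme) (A : Set (ℝ × ℝ)) : Set (ℝ × ℝ) :=
  ⋃ s : S.Sym, S.toMap s '' A

/-- The **separation condition**: the strict inequalities
`c i (j+1) > a i j + c i j` and `d (i+1) > b i + d i`. -/
def Separation (S : LGScheme) : Prop :=
  (∀ (i : Fin S.m₁) (j : Fin (S.m₂ i)) (h : (j : ℕ) + 1 < S.m₂ i),
    S.a i j + S.c i j < S.c i ⟨(j : ℕ) + 1, h⟩) ∧
  ∀ (i : Fin S.m₁) (h : (i : ℕ) + 1 < S.m₁), S.b i + S.d i < S.d ⟨(i : ℕ) + 1, h⟩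

end LGScheme

/-- The symbolic space `A_ω = A (ω 0) × A (ω 1) × ⋯` associated to a family of schemes
`S` and a sequence `ω` of indices of schemes. -/
def SymSpace {m : ℕ} (S : Fin m → LGScheme) (ω : ℕ → Fin m) : Type :=
  (n : ℕ) → (S (ω n)).Sym

namespace SymSpace

variable {m : ℕ} {S : Fin m → LGScheme} {ω : ℕ → Fin m}

/-- The **rectangle** `R_{n₁,n₂} x` in the symbolic space: the set of sequences agreeing
with `x` in the first `n₂` symbols `i` and the first `n₁` full symbols `(i,j)`. -/
def rect (x : SymSpace S ω) (n₁ n₂ : ℕ) : Set (SymSpace S ω) :=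
  {y | (∀ k < n₂, (y k).1 = (x k).1) ∧ ∀ k < n₁, y k = x k}

/-- The **width** `∏_{k<n₁} a (ω k) (x k)` of the rectangle `R_{n₁,n₂} x`. -/
def width (x : SymSpace S ω) (n₁ : ℕ) : ℝ :=
  ∏ k ∈ Finset.range n₁, (S (ω k)).a (x k).1 (x k).2

/-- The **height** `∏_{k<n₂} b (ω k) (x k)` of the rectangle `R_{n₁,n₂} x`. -/
def height (x : SymSpace S ω) (n₂ : ℕ) : ℝ :=
  ∏ k ∈ Finset.range n₂, (S (ω k)).b (x k).1

/-- `R_{n₁,n₂} x` is an **approximate square** (with comparability constant `C`) if its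
width and height agree up to the multiplicative constant `C`. -/
def IsApproxSquare (C : ℝ) (x : SymSpace S ω) (n₁ n₂ : ℕ) : Prop :=
  n₁ ≤ n₂ ∧ height x n₂ ≤ C * width x n₁ ∧ width x n₁ ≤ C * height x n₂

end SymSpace

/-- `IsLimitSet S ω Λ` : `Λ` is the limit set of the sequence of iterated function schemes
`S (ω 0), S (ω 1), …`, i.e. `Λ` is a nonempty compact set such that for every nonempty
compact `A`, the sets `F (ω 0) ∘ ⋯ ∘ F (ω (n-1)) (A)` converge to `Λ` in the Hausdorff
metric (`F k` denoting the Hutchinson operator of the scheme `S k`). -/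
def IsLimitSet {m : ℕ} (S : Fin m → LGScheme) (ω : ℕ → Fin m) (Λ : Set (ℝ × ℝ)) : Prop :=
  Λ.Nonempty ∧ IsCompact Λ ∧ ∀ A : Set (ℝ × ℝ), A.Nonempty → IsCompact A →
    Tendsto
      (fun n => hausdorffDist ((List.range n).foldr (fun k B => (S (ω k)).hutch B) A) Λ)
      atTop (nhds 0)

/-- A sequence `ω` is periodic if it has a period `T ≥ 1`. -/
def IsPeriodic {m : ℕ} (ω : ℕ → Fin m) : Prop :=
  ∃ T : ℕ, 0 < T ∧ ∀ l, ω (l + T) = ω l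

/-! ### Nested intervals generated by a sequence of increasing contractions -/

/-- The ratio `s 0 ⋯ s (n-1)` of the composition of the first `n` maps `u ↦ s k * u + t k`. -/
noncomputable def scale (s : ℕ → ℝ) (n : ℕ) : ℝ := ∏ k ∈ Finset.range n, s k

/-- The image of `0` under the composition of the first `n` maps `u ↦ s k * u + t k`, that is,
the left endpoint of the image of `[0,1]`. -/
noncomputable def leftEnd (s t : ℕ → ℝ) (n : ℕ) : ℝ := ∑ k ∈ Finset.range n, scale s k * t k

/-- The point coded by the sequence of maps `u ↦ s k * u + t k`. For sequences satisfying
`Admissible` the left endpoints increase, so that this supremum is their limit. -/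
noncomputable def codeLim (s t : ℕ → ℝ) : ℝ := ⨆ n, leftEnd s t n

/-- The maps `u ↦ s k * u + t k` send `[0,1]` into itself, increase, and have ratios at
most `θ`. -/
structure Admissible (θ : ℝ) (s t : ℕ → ℝ) : Prop where
  pos : ∀ k, 0 < s k
  le : ∀ k, s k ≤ θ
  nonneg : ∀ k, 0 ≤ t k
  add_le : ∀ k, s k + t k ≤ 1

/-- `n` is the first time at which the scale is at most `r`. -/
def IsStop (s : ℕ → ℝ) (r : ℝ) (n : ℕ) : Prop := scale s n ≤ r ∧ ∀ k < n, r < scale s k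

lemma scale_succ (s : ℕ → ℝ) (n : ℕ) : scale s (n + 1) = scale s n * s n :=
  Finset.prod_range_succ _ _

lemma leftEnd_succ (s t : ℕ → ℝ) (n : ℕ) :
    leftEnd s t (n + 1) = leftEnd s t n + scale s n * t n :=
  Finset.sum_range_succ _ _

lemma scale_congr {s s' : ℕ → ℝ} {n : ℕ} (h : ∀ k < n, s k = s' k) : scale s n = scale s' n :=
  Finset.prod_congr rfl fun k hk => h k (Finset.mem_range.1 hk)

lemma leftEnd_congr {s s' t t' : ℕ → ℝ} {n : ℕ} (h : ∀ k < n, s k = s' k)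
    (h' : ∀ k < n, t k = t' k) : leftEnd s t n = leftEnd s' t' n :=
  Finset.sum_congr rfl fun k hk => by
    have hk := Finset.mem_range.1 hk
    rw [h' k hk, scale_congr fun l hl => h l (hl.trans hk)]

namespace Admissible

variable {θ r : ℝ} {s t s' t' : ℕ → ℝ}

lemma scale_pos (h : Admissible θ s t) (n : ℕ) : 0 < scale s n :=
  Finset.prod_pos fun k _ => h.pos k

lemma scale_le_pow (h : Admissible θ s t) (n : ℕ) : scale s n ≤ θ ^ n := by
  refine (Finset.prod_le_prod (fun k _ => (h.pos k).le) (fun k _ => h.le k)).trans ?_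
  simp

lemma theta_nonneg (h : Admissible θ s t) : 0 ≤ θ := (h.pos 0).le.trans (h.le 0)

lemma leftEnd_mono (h : Admissible θ s t) : Monotone (leftEnd s t) :=
  monotone_nat_of_le_succ fun n => by
    rw [leftEnd_succ]
    have := mul_nonneg (h.scale_pos n).le (h.nonneg n)
    linarith

/-- The right endpoints `leftEnd s t n + scale s n` decrease. -/
lemma rightEnd_anti (h : Admissible θ s t) : Antitone fun n => leftEnd s t n + scale s n :=
  antitone_nat_of_succ_le fun n => by
    rw [leftEnd_succ, scale_succ]
    have := mul_le_mul_of_nonneg_left (h.add_le n) (h.scale_pos n).le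
    linarith

lemma leftEnd_le_rightEnd (h : Admissible θ s t) (n k : ℕ) :
    leftEnd s t n ≤ leftEnd s t k + scale s k := by
  rcases le_total n k with hnk | hkn
  · exact (h.leftEnd_mono hnk).trans (by linarith [h.scale_pos k])
  · have := h.rightEnd_anti hkn
    have := h.scale_pos n
    simp only at *
    linarith

lemma leftEnd_le_codeLim (h : Admissible θ s t) (n : ℕ) : leftEnd s t n ≤ codeLim s t :=
  le_ciSup ⟨_, by rintro _ ⟨k, rfl⟩; exact h.leftEnd_le_rightEnd k 0⟩ n

lemma codeLim_le (h : Admissible θ s t) (n : ℕ) : codeLim s t ≤ leftEnd s t n + scale s n :=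
  ciSup_le fun k => h.leftEnd_le_rightEnd k n

lemma abs_sub_le (h : Admissible θ s t) (n : ℕ) : |leftEnd s t n - codeLim s t| ≤ scale s n := by
  have := h.leftEnd_le_codeLim n
  have := h.codeLim_le n
  rw [abs_le]; constructor <;> linarith [h.scale_pos n]

lemma abs_codeLim_sub_le (h : Admissible θ s t) (h' : Admissible θ s' t') {n : ℕ}
    (hs : ∀ k < n, s k = s' k) (ht : ∀ k < n, t k = t' k) :
    |codeLim s t - codeLim s' t'| ≤ scale s n := by
  have h1 := h.leftEnd_le_codeLim n
  have h2 := h.codeLim_le n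
  have h3 := h'.leftEnd_le_codeLim n
  have h4 := h'.codeLim_le n
  rw [← leftEnd_congr hs ht] at h3 h4
  rw [← scale_congr hs] at h4
  rw [abs_le]; constructor <;> linarith

lemma exists_isStop (h : Admissible θ s t) (hθ : θ < 1) (hr : 0 < r) : ∃ n, IsStop s r n := by
  classical
  have : ∃ n, scale s n ≤ r := by
    obtain ⟨n, hn⟩ := exists_pow_lt_of_lt_one hr hθ
    exact ⟨n, (h.scale_le_pow n).trans hn.le⟩
  exact ⟨Nat.find this, Nat.find_spec this, fun k hk => not_le.1 (Nat.find_min this hk)⟩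

/-- At the stopping time the scale has dropped below `r` by at most one factor; `r < 1` excludes
the stopping time `0`. -/
lemma mul_lt_scale_of_isStop (hr : 0 < r) (hr1 : r < 1) {α : ℝ}
    (hα : 0 < α) (hs : ∀ k, α ≤ s k) {n : ℕ} (hn : IsStop s r n) : α * r < scale s n := by
  obtain ⟨hn, hn'⟩ := hn
  cases n with
  | zero => simp [scale] at hn; linarith
  | succ n =>
    rw [scale_succ]
    have h1 := hn' n (Nat.lt_succ_self n)
    have h2 := hs n
    nlinarith

/-- If two sequences agree before time `k` and the images of `[0,1]` under their `k`-th maps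
are in order, then so are all later intervals. -/
lemma rightEnd_le_leftEnd (h : Admissible θ s t) (h' : Admissible θ s' t') {k n n' : ℕ}
    (hs : ∀ l < k, s l = s' l) (ht : ∀ l < k, t l = t' l) (hk : s k + t k ≤ t' k)
    (hn : k < n) (hn' : k < n') : leftEnd s t n + scale s n ≤ leftEnd s' t' n' := by
  have h1 := h.rightEnd_anti (Nat.succ_le_of_lt hn)
  have h2 := h'.leftEnd_mono (Nat.succ_le_of_lt hn')
  simp only [Nat.succ_eq_add_one, leftEnd_succ, scale_succ] at h1 h2
  rw [← leftEnd_congr hs ht, ← scale_congr hs] at h2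
  have := mul_le_mul_of_nonneg_left hk (h.scale_pos k).le
  linarith

/-- Two intervals of scale `r` whose interiors meet come from sequences that agree up to the
stopping time. Agreement at time `k` is recorded by `e k`, and distinct symbols are assumed to
give non-overlapping images of `[0,1]`. -/
lemma agree_of_overlap (h : Admissible θ s t) (h' : Admissible θ s' t') {n n' : ℕ}
    (hn : IsStop s r n) (hn' : IsStop s' r n') (e : ℕ → Prop)
    (hes : ∀ k, e k → s k = s' k) (het : ∀ k, e k → t k = t' k)
    (hsep : ∀ k < n, ¬ e k → s k + t k ≤ t' k ∨ s' k + t' k ≤ t k)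
    (h1 : leftEnd s t n < leftEnd s' t' n' + scale s' n')
    (h2 : leftEnd s' t' n' < leftEnd s t n + scale s n) : ∀ k < n, e k := by
  intro k
  induction k using Nat.strong_induction_on with
  | _ k ih =>
    intro hk
    have ih : ∀ l < k, e l := fun l hl => ih l hl (hl.trans hk)
    -- Both scales coincide up to time `k`, so the second sequence has not stopped yet either.
    have hk' : k < n' := by
      by_contra! hc
      have h3 := hn.2 n' (lt_of_le_of_lt hc hk)
      rw [scale_congr fun l hl => hes l (ih l (lt_of_lt_of_le hl hc))] at h3
      exact absurd hn'.1 (not_le.2 h3)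
    by_contra hek
    rcases hsep k hk hek with hc | hc
    · have := h.rightEnd_le_leftEnd h' (fun l hl => hes l (ih l hl)) (fun l hl => het l (ih l hl))
        hc hk hk'
      linarith
    · have := h'.rightEnd_le_leftEnd h (fun l hl => (hes l (ih l hl)).symm)
        (fun l hl => (het l (ih l hl)).symm) hc hk' hk
      linarith

end Admissible

/-! ### Comparison of dimensions through a common parametrization -/

open MeasureTheory Measure in
/-- Let `R` and `R'` parametrize (parts of) two sets by the same parameters. Suppose that for
every set `U` of diameter at most `r`, the parameters of the points of `U` split into a bounded
number of classes (the fibres of `g`), each of which `R'` maps to a set of diameter at most `C * r`.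
Then covers of the first set give comparable covers of the second one. -/
lemma dimH_le_of_classes {Z ι E E' : Type*} [Fintype ι] [MetricSpace E] [MetricSpace E']
    (R : Z → E) (R' : Z → E') (C : ℝ) (hC : 0 < C)
    (H : ∀ r : ℝ, 0 < r → r < 1 → ∀ U : Set E, (∀ p ∈ U, ∀ q ∈ U, dist p q ≤ r) →
      ∃ g : Z → ι, ∀ z z', R z ∈ U → R z' ∈ U → g z = g z' → dist (R' z) (R' z') ≤ C * r) :
    dimH (Set.range R') ≤ dimH (Set.range R) := by
  borelize E
  borelize E'
  refine le_of_forall_gt fun a ha => ?_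
  obtain ⟨b, hb, hba⟩ := ENNReal.lt_iff_exists_nnreal_btwn.1 ha
  refine lt_of_le_of_lt ?_ hba
  have hb0 : 0 < (b : ℝ) := by
    have : (0 : ENNReal) < b := lt_of_le_of_lt bot_le hb
    exact_mod_cast this
  have hzero := hausdorffMeasure_of_dimH_lt hb
  rw [hausdorffMeasure_apply] at hzero
  -- Near-optimal covers of the first set by sets of diameter at most `1 / (N + 2)`.
  have hcov : ∀ N : ℕ, ∃ u : ℕ → Set E, Set.range R ⊆ ⋃ n, u n ∧
      (∀ n, ediam (u n) ≤ ENNReal.ofReal (1 / (N + 2))) ∧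
      ∑' n, ediam (u n) ^ (b : ℝ) < 1 := by
    intro N
    have hr : (0 : ENNReal) < ENNReal.ofReal (1 / (N + 2)) := by
      rw [ENNReal.ofReal_pos]; positivity
    have h1 := (iSup₂_le_iff.1 hzero.le) _ hr
    have h2 := lt_of_le_of_lt h1 one_pos
    simp only [iInf_lt_iff] at h2
    obtain ⟨u, hu, hd, hsum⟩ := h2
    refine ⟨u, hu, hd, lt_of_le_of_lt (ENNReal.tsum_le_tsum fun n => ?_) hsum⟩
    rcases (u n).eq_empty_or_nonempty with h | h
    · simp [h, hb0]
    · simp [h]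
  choose u hu hd hsum using hcov
  -- The scale attached to the `n`-th set; the correction makes it positive.
  let ε : ℕ → ℕ → ℝ := fun N n => 1 / (N + 2) * ((1 / 2 : ℝ) ^ n) ^ (1 / (b : ℝ))
  have hε0 : ∀ N n, 0 < ε N n := fun N n => by positivity
  have hε1 : ∀ N n, ε N n ≤ 1 / (N + 2) := fun N n => by
    refine mul_le_of_le_one_right (by positivity) (Real.rpow_le_one (by positivity) ?_ (by positivity))
    exact pow_le_one₀ (by norm_num) (by norm_num)
  have hεb : ∀ N n, ENNReal.ofReal (ε N n) ^ (b : ℝ) ≤ (1 / 2 : ENNReal) ^ n := fun N n => by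
    have h1 : ε N n ≤ ((1 / 2 : ℝ) ^ n) ^ (1 / (b : ℝ)) := by
      refine mul_le_of_le_one_left (by positivity) ?_
      rw [div_le_one (by positivity)]
      have : (0 : ℝ) ≤ N := Nat.cast_nonneg N
      linarith
    rw [ENNReal.ofReal_rpow_of_pos (hε0 N n)]
    have h2 : ε N n ^ (b : ℝ) ≤ (1 / 2 : ℝ) ^ n := by
      refine (Real.rpow_le_rpow (hε0 N n).le h1 hb0.le).trans ?_
      rw [← Real.rpow_mul (by positivity), one_div_mul_cancel hb0.ne', Real.rpow_one]
    refine (ENNReal.ofReal_le_ofReal h2).trans ?_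
    rw [ENNReal.ofReal_pow (by norm_num), ENNReal.ofReal_div_of_pos (by norm_num)]
    simp
  let ρ : ℕ → ℕ → ℝ := fun N n => max (ediam (u N n)).toReal (ε N n)
  have hdtop : ∀ N n, ediam (u N n) ≠ ⊤ := fun N n =>
    ((hd N n).trans_lt ENNReal.ofReal_lt_top).ne
  have hρ0 : ∀ N n, 0 < ρ N n := fun N n => lt_max_of_lt_right (hε0 N n)
  have hρ1 : ∀ N n, ρ N n ≤ 1 / (N + 2) := fun N n =>
    max_le (ENNReal.toReal_le_of_le_ofReal (by positivity) (hd N n)) (hε1 N n)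
  have hρlt : ∀ N n, ρ N n < 1 := fun N n => by
    refine (hρ1 N n).trans_lt ?_
    rw [div_lt_one (by positivity)]
    have : (0 : ℝ) ≤ N := Nat.cast_nonneg N
    linarith
  have hρb : ∀ N n, ENNReal.ofReal (ρ N n) ^ (b : ℝ) ≤
      ediam (u N n) ^ (b : ℝ) + (1 / 2 : ENNReal) ^ n := fun N n => by
    rcases le_total (ediam (u N n)).toReal (ε N n) with h | h
    · simp only [ρ, max_eq_right h]
      exact (hεb N n).trans le_add_self
    · simp only [ρ, max_eq_left h, ENNReal.ofReal_toReal (hdtop N n)]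
      exact le_self_add
  have hdist : ∀ N n, ∀ p ∈ u N n, ∀ q ∈ u N n, dist p q ≤ ρ N n := fun N n p hp q hq => by
    refine le_max_of_le_left ?_
    rw [dist_edist]
    exact ENNReal.toReal_mono (hdtop N n) (edist_le_ediam_of_mem hp hq)
  choose g hg using fun N n => H (ρ N n) (hρ0 N n) (hρlt N n) (u N n) (hdist N n)
  let v : ℕ → ℕ × ι → Set E' := fun N p => R' '' {z | R z ∈ u N p.1 ∧ g N p.1 z = p.2}
  have hv : ∀ N p, ediam (v N p) ≤ ENNReal.ofReal C * ENNReal.ofReal (ρ N p.1) := by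
    intro N p
    refine ediam_le ?_
    rintro _ ⟨z, ⟨hz, hz'⟩, rfl⟩ _ ⟨w, ⟨hw, hw'⟩, rfl⟩
    rw [edist_dist, ← ENNReal.ofReal_mul hC.le]
    exact ENNReal.ofReal_le_ofReal (hg N p.1 z w hz hw (hz'.trans hw'.symm))
  refine dimH_le_of_hausdorffMeasure_ne_top (ne_top_of_le_ne_top ?_
    (hausdorffMeasure_le_liminf_tsum (b : ℝ) (Set.range R') (l := atTop)
      (fun N : ℕ => ENNReal.ofReal C * ENNReal.ofReal (1 / (N + 2))) ?_ v ?_ ?_))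
  · have hbound : ∀ N, ∑' p, ediam (v N p) ^ (b : ℝ) ≤
        Fintype.card ι * (ENNReal.ofReal C ^ (b : ℝ) * (1 + 2)) := by
      intro N
      calc ∑' p, ediam (v N p) ^ (b : ℝ)
          ≤ ∑' p : ℕ × ι, ENNReal.ofReal C ^ (b : ℝ) *
              (ediam (u N p.1) ^ (b : ℝ) + (1 / 2 : ENNReal) ^ p.1) := by
            refine ENNReal.tsum_le_tsum fun p => ?_
            refine (ENNReal.rpow_le_rpow (hv N p) hb0.le).trans ?_
            rw [ENNReal.mul_rpow_of_nonneg _ _ hb0.le]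
            gcongr
            exact hρb N p.1
        _ = Fintype.card ι * (ENNReal.ofReal C ^ (b : ℝ) *
              (∑' n, ediam (u N n) ^ (b : ℝ) + ∑' n : ℕ, (1 / 2 : ENNReal) ^ n)) := by
            rw [ENNReal.tsum_prod']
            simp only [tsum_fintype, Finset.sum_const, Finset.card_univ, nsmul_eq_mul]
            rw [ENNReal.tsum_mul_left, ENNReal.tsum_mul_left, ENNReal.tsum_add]
        _ ≤ _ := by
            gcongr
            · exact (hsum N).le
            · rw [ENNReal.tsum_geometric]; simp
    refine ne_top_of_le_ne_top (b := Fintype.card ι * (ENNReal.ofReal C ^ (b : ℝ) * (1 + 2))) ?_ ?_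
    · refine ENNReal.mul_ne_top (by simp) (ENNReal.mul_ne_top ?_ (by simp))
      exact ENNReal.rpow_ne_top_of_nonneg hb0.le ENNReal.ofReal_ne_top
    · exact (liminf_le_liminf (Eventually.of_forall hbound)).trans (by simp)
  · have h1 : Tendsto (fun N : ℕ => (1 : ℝ) / (N + 2)) atTop (nhds 0) := by
      have := (tendsto_add_atTop_iff_nat 1).2 (tendsto_one_div_add_atTop_nhds_zero_nat (𝕜 := ℝ))
      refine this.congr fun N => ?_
      push_cast; ring_nf
    have h2 := ENNReal.tendsto_ofReal h1
    rw [ENNReal.ofReal_zero] at h2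
    simpa using ENNReal.Tendsto.const_mul h2 (Or.inr (ENNReal.ofReal_ne_top (r := C)))
  · refine Eventually.of_forall fun N p => (hv N p).trans ?_
    gcongr
    exact hρ1 N p.1
  · refine Eventually.of_forall fun N => ?_
    rintro _ ⟨z, rfl⟩
    obtain ⟨n, hn⟩ := Set.mem_iUnion.1 (hu N ⟨z, rfl⟩)
    exact Set.mem_iUnion.2 ⟨(n, g N n z), z, ⟨hn, rfl⟩, rfl⟩

/-! ### Symbols of a family of schemes and the coding map -/

namespace LGCode

variable {m : ℕ} {S : Fin m → LGScheme} {ω : ℕ → Fin m}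

/-- The common alphabet of the family: triples `(k, i, j)` where `(i, j)` is a symbol of the
scheme `S k`. Using one alphabet for all positions lets sequences be reindexed freely. -/
abbrev Alph (S : Fin m → LGScheme) : Type :=
  (k : Fin m) × (i : Fin (S k).m₁) × Fin ((S k).m₂ i)

/-- The row `(k, i)` of a symbol `(k, i, j)`. -/
def row (y : Alph S) : (k : Fin m) × Fin (S k).m₁ := ⟨y.1, y.2.1⟩

/-- The horizontal ratio of the map of a symbol. -/
def aC (y : Alph S) : ℝ := (S y.1).a y.2.1 y.2.2
/-- The horizontal translation of the map of a symbol. -/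
def cC (y : Alph S) : ℝ := (S y.1).c y.2.1 y.2.2
/-- The vertical ratio of the map of a symbol. -/
def bC (y : Alph S) : ℝ := (S y.1).b y.2.1
/-- The vertical translation of the map of a symbol. -/
def dC (y : Alph S) : ℝ := (S y.1).d y.2.1

/-- The sequences of symbols compatible with `ω`, i.e. the symbolic space of `ω`. -/
def Codes (S : Fin m → LGScheme) (ω : ℕ → Fin m) : Set (ℕ → Alph S) := {x | ∀ n, (x n).1 = ω n}

/-- The point of the plane with a given symbolic code. -/
noncomputable def point (x : ℕ → Alph S) : ℝ × ℝ :=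
  (codeLim (fun k => aC (x k)) (fun k => cC (x k)), codeLim (fun k => bC (x k)) (fun k => dC (x k)))

/-- The composition of the maps of the first `n` symbols of `x`. -/
noncomputable def comp (x : ℕ → Alph S) (n : ℕ) (p : ℝ × ℝ) : ℝ × ℝ :=
  (scale (fun k => aC (x k)) n * p.1 + leftEnd (fun k => aC (x k)) (fun k => cC (x k)) n,
   scale (fun k => bC (x k)) n * p.2 + leftEnd (fun k => bC (x k)) (fun k => dC (x k)) n)

end LGCode

/-- Images of `[0,1]` under a finite family of increasing contractions are in order as soon as
consecutive ones are. -/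
lemma add_le_of_step {n : ℕ} (u v : Fin n → ℝ) (hu : ∀ i, 0 < u i)
    (h : ∀ (i : Fin n) (hi : (i : ℕ) + 1 < n), u i + v i ≤ v ⟨(i : ℕ) + 1, hi⟩) {i j : Fin n}
    (hij : i < j) : u i + v i ≤ v j := by
  obtain ⟨j, hj⟩ := j
  induction j with
  | zero => exact absurd hij (Nat.not_lt_zero _)
  | succ j ih =>
    have hj' : j < n := by omega
    have h1 := h ⟨j, hj'⟩ hj
    rcases Nat.lt_succ_iff_lt_or_eq.1 (show (i : ℕ) < j + 1 from hij) with h2 | h2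
    · have := ih hj' h2
      have := hu ⟨j, hj'⟩
      linarith
    · have : i = ⟨j, hj'⟩ := Fin.ext h2
      rw [this]; exact h1

lemma nonneg_of_step {n : ℕ} (hn : 0 < n) (u v : Fin n → ℝ) (hu : ∀ i, 0 < u i)
    (h : ∀ (i : Fin n) (hi : (i : ℕ) + 1 < n), u i + v i ≤ v ⟨(i : ℕ) + 1, hi⟩)
    (h0 : 0 ≤ v ⟨0, hn⟩) (i : Fin n) : 0 ≤ v i := by
  rcases Nat.eq_zero_or_pos (i : ℕ) with hi | hi
  · rwa [show i = ⟨0, hn⟩ from Fin.ext hi]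
  · have := add_le_of_step u v hu h (i := ⟨0, hn⟩) (j := i) hi
    have := hu ⟨0, hn⟩
    linarith

lemma add_le_one_of_step {n : ℕ} (hn : 0 < n) (u v : Fin n → ℝ) (hu : ∀ i, 0 < u i)
    (h : ∀ (i : Fin n) (hi : (i : ℕ) + 1 < n), u i + v i ≤ v ⟨(i : ℕ) + 1, hi⟩)
    (h1 : v ⟨n - 1, Nat.sub_lt hn Nat.one_pos⟩ ≤ 1 - u ⟨n - 1, Nat.sub_lt hn Nat.one_pos⟩)
    (i : Fin n) : u i + v i ≤ 1 := by
  rcases Nat.lt_or_ge (i : ℕ) (n - 1) with hi | hi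
  · have := add_le_of_step u v hu h (i := i) (j := ⟨n - 1, Nat.sub_lt hn Nat.one_pos⟩) hi
    have := hu ⟨n - 1, Nat.sub_lt hn Nat.one_pos⟩
    linarith
  · rw [show i = ⟨n - 1, Nat.sub_lt hn Nat.one_pos⟩ from Fin.ext (by have := i.2; simp; omega)]
    linarith

lemma LGScheme.b_pos (T : LGScheme) (i : Fin T.m₁) : 0 < T.b i :=
  (T.ha_pos i ⟨0, T.hm₂ i⟩).trans_le (T.hab i _)

lemma exists_pos_lower_bound {ι : Type*} [Finite ι] (f : ι → ℝ) (hf : ∀ i, 0 < f i) :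
    ∃ α : ℝ, 0 < α ∧ ∀ i, α ≤ f i := by
  rcases isEmpty_or_nonempty ι with h | h
  · exact ⟨1, one_pos, fun i => h.elim i⟩
  · obtain ⟨i, hi⟩ := Finite.exists_min f
    exact ⟨f i, hf i, hi⟩

namespace LGCode

variable {m : ℕ} {S : Fin m → LGScheme} {ω : ℕ → Fin m}

lemma bC_congr {y y' : Alph S} (h : row y = row y') : bC y = bC y' :=
  congrArg (fun z : (k : Fin m) × Fin (S k).m₁ => (S z.1).b z.2) h

lemma dC_congr {y y' : Alph S} (h : row y = row y') : dC y = dC y' :=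
  congrArg (fun z : (k : Fin m) × Fin (S k).m₁ => (S z.1).d z.2) h

lemma aC_pos (y : Alph S) : 0 < aC y := (S y.1).ha_pos _ _

lemma aC_le_bC (y : Alph S) : aC y ≤ bC y := (S y.1).hab _ _

/-- Distinct rows of one scheme do not overlap vertically. -/
lemma sep_row {y y' : Alph S} (h : y.1 = y'.1) (hr : row y ≠ row y') :
    bC y + dC y ≤ dC y' ∨ bC y' + dC y' ≤ dC y := by
  obtain ⟨k, i, j⟩ := y
  obtain ⟨k', i', j'⟩ := y'
  obtain rfl : k = k' := h
  have hne : i ≠ i' := fun h => hr (by simp [row, h])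
  rcases lt_or_gt_of_ne hne with h | h
  · exact Or.inl (add_le_of_step (S k).b (S k).d (S k).b_pos (S k).hd_step h)
  · exact Or.inr (add_le_of_step (S k).b (S k).d (S k).b_pos (S k).hd_step h)

/-- Distinct symbols of one row do not overlap horizontally. -/
lemma sep_symbol {y y' : Alph S} (h : row y = row y') (hr : y ≠ y') :
    aC y + cC y ≤ cC y' ∨ aC y' + cC y' ≤ cC y := by
  obtain ⟨k, i, j⟩ := y
  obtain ⟨k', i', j'⟩ := y'
  simp only [row, Sigma.mk.injEq] at h
  obtain ⟨rfl, h⟩ := h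
  obtain rfl := eq_of_heq h
  have hne : j ≠ j' := fun h => hr (by simp [h])
  rcases lt_or_gt_of_ne hne with h | h
  · exact Or.inl (add_le_of_step _ _ ((S k).ha_pos i) ((S k).hc_step i) h)
  · exact Or.inr (add_le_of_step _ _ ((S k).ha_pos i) ((S k).hc_step i) h)

/-- All ratios stay away from `0` and `1`. -/
lemma exists_bounds (S : Fin m → LGScheme) :
    ∃ α θ : ℝ, 0 < α ∧ θ < 1 ∧ (∀ y : Alph S, α ≤ aC y) ∧ ∀ y : Alph S, bC y ≤ θ := by
  obtain ⟨α, hα, h⟩ := exists_pos_lower_bound (fun y : Alph S => aC y) aC_pos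
  obtain ⟨β, hβ, h'⟩ := exists_pos_lower_bound (fun y : Alph S => 1 - bC y)
    (fun y => sub_pos.2 ((S y.1).hb_lt_one _))
  exact ⟨α, 1 - β, hα, by linarith, h, fun y => by linarith [h' y]⟩

lemma admissible_h {θ : ℝ} (hθ : ∀ y : Alph S, bC y ≤ θ) (x : ℕ → Alph S) :
    Admissible θ (fun k => aC (x k)) (fun k => cC (x k)) where
  pos _ := aC_pos _
  le _ := (aC_le_bC _).trans (hθ _)
  nonneg k := nonneg_of_step ((S (x k).1).hm₂ _) _ _ ((S (x k).1).ha_pos _)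
    ((S (x k).1).hc_step _) ((S (x k).1).hc_first _) _
  add_le k := add_le_one_of_step ((S (x k).1).hm₂ _) _ _ ((S (x k).1).ha_pos _)
    ((S (x k).1).hc_step _) ((S (x k).1).hc_last _) _

lemma admissible_v {θ : ℝ} (hθ : ∀ y : Alph S, bC y ≤ θ) (x : ℕ → Alph S) :
    Admissible θ (fun k => bC (x k)) (fun k => dC (x k)) where
  pos _ := (aC_pos _).trans_le (aC_le_bC _)
  le _ := hθ _
  nonneg k := nonneg_of_step (S (x k).1).hm₁ _ _ (S (x k).1).b_pos
    (S (x k).1).hd_step (S (x k).1).hd_first _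
  add_le k := add_le_one_of_step (S (x k).1).hm₁ _ _ (S (x k).1).b_pos
    (S (x k).1).hd_step (S (x k).1).hd_last _

/-! ### The limit set is the image of the coding map -/

lemma codes_nonempty : (Codes S ω).Nonempty :=
  ⟨fun n => ⟨ω n, ⟨0, (S (ω n)).hm₁⟩, ⟨0, (S (ω n)).hm₂ _⟩⟩, fun _ => rfl⟩

lemma comp_congr {x x' : ℕ → Alph S} {n : ℕ} (h : ∀ k < n, x k = x' k) :
    comp x n = comp x' n := by
  funext p
  have ha : ∀ k < n, aC (x k) = aC (x' k) := fun k hk => by rw [h k hk]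
  have hb : ∀ k < n, bC (x k) = bC (x' k) := fun k hk => by rw [h k hk]
  have hc : ∀ k < n, cC (x k) = cC (x' k) := fun k hk => by rw [h k hk]
  have hd : ∀ k < n, dC (x k) = dC (x' k) := fun k hk => by rw [h k hk]
  simp only [comp]
  rw [scale_congr ha, scale_congr hb, leftEnd_congr ha hc, leftEnd_congr hb hd]

lemma comp_succ (x : ℕ → Alph S) (n : ℕ) (p : ℝ × ℝ) :
    comp x (n + 1) p = comp x n ((S (x n).1).toMap (x n).2 p) := by
  simp only [comp, LGScheme.toMap, scale_succ, leftEnd_succ, aC, bC, cC, dC]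
  ext <;> simp only <;> ring

lemma foldr_hutch (S : Fin m → LGScheme) (ω : ℕ → Fin m) (n : ℕ) (A : Set (ℝ × ℝ)) :
    (List.range n).foldr (fun k B => (S (ω k)).hutch B) A = ⋃ x ∈ Codes S ω, comp x n '' A := by
  induction n generalizing A with
  | zero =>
    have h : ∀ x : ℕ → Alph S, comp x 0 = id := fun x => by
      funext p; simp [comp, scale, leftEnd]
    simp [h, Set.biUnion_const codes_nonempty]
  | succ n ih =>
    rw [List.range_succ, List.foldr_append, ih]
    ext q
    simp only [List.foldr_cons, List.foldr_nil, LGScheme.hutch, Set.mem_iUnion, Set.mem_image]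
    constructor
    · rintro ⟨x, hx, _, ⟨s, p, hp, rfl⟩, rfl⟩
      -- Only the first `n` symbols of `x` matter, so the `n`-th one may be replaced by `s`.
      have hlt : ∀ k < n, Function.update x n ⟨ω n, s⟩ k = x k := fun k hk =>
        Function.update_of_ne hk.ne _ _
      refine ⟨Function.update x n ⟨ω n, s⟩, fun k => ?_, p, hp, ?_⟩
      · rcases eq_or_ne k n with rfl | hk
        · simp
        · rw [Function.update_of_ne hk]; exact hx k
      · rw [comp_succ, comp_congr hlt, Function.update_self]
    · rintro ⟨x, hx, p, hp, rfl⟩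
      have key : ∀ (k : Fin m) (y : Alph S), y.1 = k →
          ∃ s : (S k).Sym, (S k).toMap s p = (S y.1).toMap y.2 p := by
        rintro k y rfl; exact ⟨y.2, rfl⟩
      obtain ⟨s, hs⟩ := key _ _ (hx n)
      exact ⟨x, hx, _, ⟨s, p, hp, rfl⟩, by rw [comp_succ, hs]⟩

lemma dist_comp_point {θ : ℝ} (hθ : ∀ y : Alph S, bC y ≤ θ) (x : ℕ → Alph S) (n : ℕ) :
    dist (comp x n (0, 0)) (point x) ≤ θ ^ n := by
  have h1 := (admissible_h hθ x).abs_sub_le n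
  have h2 := (admissible_v hθ x).abs_sub_le n
  have h3 := (admissible_h hθ x).scale_le_pow n
  have h4 := (admissible_v hθ x).scale_le_pow n
  rw [Prod.dist_eq]
  simp only [comp, point, mul_zero, zero_add, Real.dist_eq]
  exact max_le (h1.trans h3) (h2.trans h4)

/-- The coding map is continuous on a compact space of codes. -/
lemma isCompact_image {θ : ℝ} (hθ : ∀ y : Alph S, bC y ≤ θ) (hθ1 : θ < 1) (hθ0 : 0 ≤ θ) :
    IsCompact (point '' Codes S ω) := by
  let _ : TopologicalSpace (Alph S) := ⊥
  have : DiscreteTopology (Alph S) := ⟨rfl⟩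
  have hfun : ∀ (f : Alph S → ℝ) (k : ℕ), Continuous fun x : ℕ → Alph S => f (x k) := fun f k =>
    continuous_of_discreteTopology.comp (continuous_apply k)
  have hcont : Continuous (point (S := S)) := by
    have hu : TendstoUniformly (fun n (x : ℕ → Alph S) => comp x n (0, 0)) point atTop := by
      rw [Metric.tendstoUniformly_iff]
      intro ε hε
      filter_upwards [(tendsto_pow_atTop_nhds_zero_of_lt_one hθ0 hθ1).eventually_lt_const hε]
        with n hn x
      rw [dist_comm]
      exact (dist_comp_point hθ x n).trans_lt hn
    refine hu.continuous (Frequently.of_forall fun n => ?_)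
    simp only [comp, mul_zero, zero_add, leftEnd, scale]
    refine Continuous.prodMk ?_ ?_ <;>
    · refine continuous_finsetSum _ fun k _ => Continuous.mul ?_ (hfun _ k)
      exact continuous_finsetProd _ fun l _ => hfun _ l
  refine IsCompact.image ?_ hcont
  refine IsClosed.isCompact ?_
  have : Codes S ω = ⋂ n, (fun x : ℕ → Alph S => x n) ⁻¹' {y | y.1 = ω n} := by
    ext x; simp [Codes]
  rw [this]
  exact isClosed_iInter fun n => (isClosed_discrete _).preimage (continuous_apply n)

lemma limitSet_eq {Λ : Set (ℝ × ℝ)} (hΛ : IsLimitSet S ω Λ) : Λ = point '' Codes S ω := by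
  obtain ⟨hne, hcpt, hlim⟩ := hΛ
  obtain ⟨α, θ, hα, hθ1, -, hθ⟩ := exists_bounds S
  obtain ⟨x₀, hx₀⟩ := codes_nonempty (S := S) (ω := ω)
  have hθ0 := (admissible_h hθ x₀).theta_nonneg
  have hK : IsCompact (point '' Codes S ω) := isCompact_image hθ hθ1 hθ0
  have hKne : (point '' Codes S ω).Nonempty := ⟨_, x₀, hx₀, rfl⟩
  have hfin := hausdorffEDist_ne_top_of_nonempty_of_bounded hne hKne hcpt.isBounded hK.isBounded
  refine (hcpt.isClosed.hausdorffDist_zero_iff_eq hK.isClosed hfin).1 ?_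
  have h1 := hlim {(0, 0)} (Set.singleton_nonempty _) isCompact_singleton
  have h2 := h1.add (tendsto_pow_atTop_nhds_zero_of_lt_one hθ0 hθ1)
  rw [add_zero] at h2
  refine le_antisymm (ge_of_tendsto' h2 fun n => ?_) hausdorffDist_nonneg
  rw [foldr_hutch]
  set B := ⋃ x ∈ Codes S ω, comp x n '' {(0, 0)} with hB
  have hBK : hausdorffDist B (point '' Codes S ω) ≤ θ ^ n := by
    refine hausdorffDist_le_of_mem_dist (pow_nonneg hθ0 n) ?_ ?_
    · intro p hp
      simp only [hB, Set.mem_iUnion, Set.image_singleton, Set.mem_singleton_iff] at hp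
      obtain ⟨x, hx, rfl⟩ := hp
      exact ⟨_, ⟨x, hx, rfl⟩, dist_comp_point hθ x n⟩
    · rintro _ ⟨x, hx, rfl⟩
      refine ⟨comp x n (0, 0), ?_, by rw [dist_comm]; exact dist_comp_point hθ x n⟩
      exact Set.mem_biUnion hx ⟨_, rfl, rfl⟩
  have hBne : B.Nonempty := ⟨_, Set.mem_biUnion hx₀ ⟨_, rfl, rfl⟩⟩
  have hBbd : Bornology.IsBounded B := by
    refine (hK.isBounded.cthickening (δ := θ ^ n)).subset fun p hp => ?_
    simp only [hB, Set.mem_iUnion, Set.image_singleton, Set.mem_singleton_iff] at hp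
    obtain ⟨x, hx, rfl⟩ := hp
    exact mem_cthickening_of_dist_le _ _ _ _ ⟨x, hx, rfl⟩ (dist_comp_point hθ x n)
  have h3 := hausdorffDist_triangle (u := point '' Codes S ω)
    (hausdorffEDist_ne_top_of_nonempty_of_bounded hne hBne hcpt.isBounded hBbd)
  rw [hausdorffDist_comm] at h3
  rw [hausdorffDist_comm (s := B)]
  rw [hausdorffDist_comm (s := point '' Codes S ω)] at h3
  linarith

end LGCode

/-! ### Rearrangement of the codes and comparison of the limit sets -/

/-- Two periodic sequences with the same frequencies are block rearrangements of one another. -/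
lemma exists_perm {m : ℕ} {Q : Fin m → ℝ} {ω ω' : ℕ → Fin m} (hω : IsPeriodic ω)
    (hω' : IsPeriodic ω') (hQ : ∀ k, HasLimitFreq ω k (Q k)) (hQ' : ∀ k, HasLimitFreq ω' k (Q k)) :
    ∃ (T : ℕ) (σ : Equiv.Perm ℕ), 0 < T ∧ (∀ n, σ n / T = n / T) ∧ ∀ n, ω (σ n) = ω' n := by
  obtain ⟨T₁, hT₁, h₁⟩ := hω
  obtain ⟨T₂, hT₂, h₂⟩ := hω'
  have hT : 0 < T₁ * T₂ := Nat.mul_pos hT₁ hT₂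
  have hp : Function.Periodic ω (T₁ * T₂) := by
    have := (show Function.Periodic ω T₁ from h₁).nat_mul T₂
    rwa [Nat.cast_id, mul_comm] at this
  have hp' : Function.Periodic ω' (T₁ * T₂) := by
    have := (show Function.Periodic ω' T₂ from h₂).nat_mul T₁
    rwa [Nat.cast_id] at this
  generalize T₁ * T₂ = T at hT hp' hp
  -- The number of occurrences of `k` in a block is `Q k * T`.
  have hcount : ∀ (υ : ℕ → Fin m), Function.Periodic υ T → ∀ k, HasLimitFreq υ k (Q k) →
      (T.count (fun l => υ l = k) : ℝ) = Q k * T := by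
    intro υ hυ k hk
    have hpk : Function.Periodic (fun l => υ l = k) T := fun l => by simp only [hυ l]
    have hblocks : ∀ j : ℕ, ((Finset.range (j * T)).filter fun l => υ l = k).card =
        j * T.count (fun l => υ l = k) := by
      intro j
      induction j with
      | zero => simp
      | succ j ih =>
        rw [← Nat.count_eq_card_filter_range] at ih ⊢
        rw [Nat.succ_mul, Nat.succ_mul, Nat.count_add, ih]
        congr 2
        funext l
        have := hpk.nat_mul j l
        simp only [Nat.cast_id] at this
        rw [add_comm]; exact this
    have hsub : Tendsto (fun j : ℕ => (j + 1) * T) atTop atTop :=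
      tendsto_atTop_mono
        (fun j => (Nat.le_succ j).trans (Nat.le_mul_of_pos_right _ hT)) tendsto_id
    have hlim := hk.comp hsub
    have hconst : ∀ j : ℕ, ((((Finset.range ((j + 1) * T)).filter fun l => υ l = k).card : ℝ) /
        ((j + 1) * T : ℕ)) = T.count (fun l => υ l = k) / T := by
      intro j
      rw [hblocks]
      have : (T : ℝ) ≠ 0 := by positivity
      push_cast
      field_simp
    have := tendsto_nhds_unique (hlim.congr hconst) tendsto_const_nhds
    rw [this]
    have : (T : ℝ) ≠ 0 := by positivity
    field_simp
  have hfib : ∀ (υ : ℕ → Fin m), Function.Periodic υ T → ∀ z : ℕ × Fin m,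
      ∀ n, n ∈ ((Finset.Ico (z.1 * T) (z.1 * T + T)).filter fun l => υ l = z.2) ↔
        (n / T, υ n) = z := by
    rintro υ - ⟨q, k⟩ n
    simp only [Finset.mem_filter, Finset.mem_Ico, Prod.mk.injEq]
    rw [Nat.div_eq_iff hT]
    have : q * T + T - 1 + 1 = q * T + T := by omega
    constructor
    · rintro ⟨⟨h1, h2⟩, h3⟩; exact ⟨⟨h1, by omega⟩, h3⟩
    · rintro ⟨⟨h1, h2⟩, h3⟩; exact ⟨⟨h1, by omega⟩, h3⟩
  have hequiv : ∀ z : ℕ × Fin m, Nonempty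
      ({n // (n / T, ω' n) = z} ≃ {n // (n / T, ω n) = z}) := by
    intro z
    have hpk : Function.Periodic (fun l => ω l = z.2) T := fun l => by simp only [hp l]
    have hpk' : Function.Periodic (fun l => ω' l = z.2) T := fun l => by simp only [hp' l]
    have hcard : ((Finset.Ico (z.1 * T) (z.1 * T + T)).filter fun l => ω' l = z.2).card =
        ((Finset.Ico (z.1 * T) (z.1 * T + T)).filter fun l => ω l = z.2).card := by
      rw [Nat.filter_Ico_card_eq_of_periodic _ _ _ hpk,
        Nat.filter_Ico_card_eq_of_periodic _ _ _ hpk']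
      have := (hcount ω' hp' z.2 (hQ' z.2)).trans (hcount ω hp z.2 (hQ z.2)).symm
      exact_mod_cast this
    exact ⟨(Equiv.subtypeEquivRight fun n => (hfib ω' hp' z n).symm).trans
      ((Finset.equivOfCardEq hcard).trans (Equiv.subtypeEquivRight (hfib ω hp z)))⟩
  let σ : Equiv.Perm ℕ := (Equiv.sigmaFiberEquiv fun n => (n / T, ω' n)).symm.trans
    ((Equiv.sigmaCongrRight fun z => (hequiv z).some).trans
      (Equiv.sigmaFiberEquiv fun n => (n / T, ω n)))
  have hσ : ∀ n, (σ n / T, ω (σ n)) = (n / T, ω' n) := fun n =>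
    ((hequiv (n / T, ω' n)).some ⟨n, rfl⟩).2
  exact ⟨T, σ, hT, fun n => congrArg Prod.fst (hσ n), fun n => congrArg Prod.snd (hσ n)⟩

/-- A rearrangement within blocks of length `T` does not change scales at ends of blocks. -/
lemma scale_perm {T : ℕ} (hT : 0 < T) (σ : Equiv.Perm ℕ) (hσ : ∀ n, σ n / T = n / T) (s : ℕ → ℝ)
    (q : ℕ) : scale (fun k => s (σ k)) (q * T) = scale s (q * T) := by
  refine Finset.prod_equiv σ (fun k => ?_) (fun k _ => rfl)
  rw [Finset.mem_range, Finset.mem_range, ← Nat.div_lt_iff_lt_mul hT, ← Nat.div_lt_iff_lt_mul hT,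
    hσ]

lemma perm_lt {T : ℕ} (hT : 0 < T) (σ : Equiv.Perm ℕ) (hσ : ∀ n, σ n / T = n / T) {k n : ℕ}
    (hk : k < n / T * T) : σ k < n := by
  rw [← Nat.div_lt_iff_lt_mul hT, ← hσ, Nat.div_lt_iff_lt_mul hT] at hk
  exact hk.trans_le (Nat.div_mul_le_self n T)

/-- Going back to the beginning of a block enlarges the scale by a bounded factor. -/
lemma scale_block_le {T : ℕ} (hT : 0 < T) {α : ℝ} (hα : 0 < α) {s : ℕ → ℝ} (hs : ∀ k, α ≤ s k)
    (hs1 : ∀ k, s k ≤ 1) (n : ℕ) : scale s (n / T * T) ≤ scale s n / α ^ T := by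
  have hpos : ∀ k, 0 < s k := fun k => hα.trans_le (hs k)
  rw [le_div_iff₀ (by positivity)]
  have hα1 : α ≤ 1 := (hs 0).trans (hs1 0)
  have h : scale s n = scale s (n / T * T) * ∏ k ∈ Finset.Ico (n / T * T) n, s k :=
    (Finset.prod_range_mul_prod_Ico _ (Nat.div_mul_le_self n T)).symm
  rw [h]
  refine mul_le_mul_of_nonneg_left ?_ (Finset.prod_nonneg fun k _ => (hpos k).le)
  calc α ^ T ≤ α ^ (n - n / T * T) := by
        refine pow_le_pow_of_le_one hα.le hα1 ?_
        have := Nat.div_add_mod' n T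
        have := Nat.mod_lt n hT
        omega
    _ ≤ _ := by
        rw [← Nat.card_Ico, ← Finset.prod_const]
        exact Finset.prod_le_prod (fun k _ => hα.le) (fun k _ => hs k)

namespace LGCode

variable {m : ℕ} {S : Fin m → LGScheme} {ω ω' : ℕ → Fin m}

/-- Two codes whose approximate squares of scale `r` are less than `α * r` apart, measured between
lower left corners, lie in the same approximate square. -/
lemma same_square {α θ r : ℝ} (hα : 0 < α) (hr : 0 < r) (hr1 : r < 1)
    (hαS : ∀ y : Alph S, α ≤ aC y) (hθ : ∀ y : Alph S, bC y ≤ θ) {x x' : ℕ → Alph S}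
    (hx : x ∈ Codes S ω) (hx' : x' ∈ Codes S ω) {n₁ n₂ n₁' n₂' : ℕ}
    (h1 : IsStop (fun k => aC (x k)) r n₁) (h1' : IsStop (fun k => aC (x' k)) r n₁')
    (h2 : IsStop (fun k => bC (x k)) r n₂) (h2' : IsStop (fun k => bC (x' k)) r n₂')
    (hd1 : |leftEnd (fun k => aC (x k)) (fun k => cC (x k)) n₁ -
      leftEnd (fun k => aC (x' k)) (fun k => cC (x' k)) n₁'| < α * r)
    (hd2 : |leftEnd (fun k => bC (x k)) (fun k => dC (x k)) n₂ -
      leftEnd (fun k => bC (x' k)) (fun k => dC (x' k)) n₂'| < α * r) :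
    (∀ k < n₂, row (x k) = row (x' k)) ∧ ∀ k < n₁, x k = x' k := by
  have hαb : ∀ y : Alph S, α ≤ bC y := fun y => (hαS y).trans (aC_le_bC y)
  have s1 := Admissible.mul_lt_scale_of_isStop hr hr1 hα (fun k => hαS (x k)) h1
  have s1' := Admissible.mul_lt_scale_of_isStop hr hr1 hα (fun k => hαS (x' k)) h1'
  have s2 := Admissible.mul_lt_scale_of_isStop hr hr1 hα (fun k => hαb (x k)) h2
  have s2' := Admissible.mul_lt_scale_of_isStop hr hr1 hα (fun k => hαb (x' k)) h2'
  rw [abs_lt] at hd1 hd2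
  have hrow : ∀ k < n₂, row (x k) = row (x' k) :=
    (admissible_v hθ x).agree_of_overlap (admissible_v hθ x') h2 h2' (fun k => row (x k) = row (x' k))
      (fun k hk => bC_congr hk) (fun k hk => dC_congr hk)
      (fun k _ hk => sep_row ((hx k).trans (hx' k).symm) hk) (by linarith) (by linarith)
  -- Widths are at most heights, so the rows agree for as long as is needed to compare columns.
  have h12 : n₁ ≤ n₂ := by
    by_contra! hlt
    have h3 := h1.2 n₂ hlt
    have h4 : scale (fun k => aC (x k)) n₂ ≤ scale (fun k => bC (x k)) n₂ :=
      Finset.prod_le_prod (fun k _ => (aC_pos _).le) (fun k _ => aC_le_bC _)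
    linarith [h2.1]
  refine ⟨hrow, (admissible_h hθ x).agree_of_overlap (admissible_h hθ x') h1 h1'
    (fun k => x k = x' k) (fun k hk => by rw [hk]) (fun k hk => by rw [hk])
    (fun k hk hne => sep_symbol (hrow k (hk.trans_le h12)) hne) (by linarith) (by linarith)⟩

/-- After rearrangement, two codes in a common approximate square of scale `r` code points at
distance comparable to `r`. -/
lemma dist_point_perm {α θ r : ℝ} (hα : 0 < α) (hθ1 : θ < 1)
    (hαS : ∀ y : Alph S, α ≤ aC y) (hθ : ∀ y : Alph S, bC y ≤ θ) {T : ℕ} (hT : 0 < T)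
    (σ : Equiv.Perm ℕ) (hσ : ∀ n, σ n / T = n / T) {x x' : ℕ → Alph S} {n₁ n₂ : ℕ}
    (h1 : IsStop (fun k => aC (x k)) r n₁) (h2 : IsStop (fun k => bC (x k)) r n₂)
    (hrow : ∀ k < n₂, row (x k) = row (x' k)) (hsym : ∀ k < n₁, x k = x' k) :
    dist (point (x ∘ σ)) (point (x' ∘ σ)) ≤ 1 / α ^ T * r := by
  have hb1 : ∀ y : Alph S, bC y ≤ 1 := fun y => (hθ y).trans hθ1.le
  have hpow : 0 < α ^ T := pow_pos hα T
  have e1 : ∀ k < n₁ / T * T, x (σ k) = x' (σ k) := fun k hk => hsym _ (perm_lt hT σ hσ hk)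
  have e2 : ∀ k < n₂ / T * T, row (x (σ k)) = row (x' (σ k)) := fun k hk =>
    hrow _ (perm_lt hT σ hσ hk)
  rw [Prod.dist_eq]
  refine max_le ?_ ?_
  · have h := (admissible_h hθ (x ∘ σ)).abs_codeLim_sub_le (admissible_h hθ (x' ∘ σ))
      (n := n₁ / T * T) (fun k hk => congrArg aC (e1 k hk)) (fun k hk => congrArg cC (e1 k hk))
    refine (h.trans_eq (scale_perm hT σ hσ (fun k => aC (x k)) _)).trans ?_
    refine (scale_block_le hT hα (fun k => hαS (x k))
      (fun k => (aC_le_bC _).trans (hb1 _)) n₁).trans ?_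
    rw [one_div_mul_eq_div]
    exact div_le_div_of_nonneg_right h1.1 hpow.le
  · have h := (admissible_v hθ (x ∘ σ)).abs_codeLim_sub_le (admissible_v hθ (x' ∘ σ))
      (n := n₂ / T * T) (fun k hk => bC_congr (e2 k hk)) (fun k hk => dC_congr (e2 k hk))
    refine (h.trans_eq (scale_perm hT σ hσ (fun k => bC (x k)) _)).trans ?_
    refine (scale_block_le hT hα (fun k => (hαS (x k)).trans (aC_le_bC _))
      (fun k => hb1 _) n₂).trans ?_
    rw [one_div_mul_eq_div]
    exact div_le_div_of_nonneg_right h2.1 hpow.le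

/-- Reals in the same cell of the grid of mesh `β` starting at `o` are less than `β` apart. Only
the first `N + 1` cells are considered, so that reducing their numbers modulo `N + 1` is harmless. -/
lemma abs_sub_lt_of_ofNat_eq {N : ℕ} {β o u v : ℝ} (hβ : 0 < β) (hu : 0 ≤ u - o) (hv : 0 ≤ v - o)
    (hu' : (u - o) / β < N + 1) (hv' : (v - o) / β < N + 1)
    (h : Fin.ofNat (N + 1) ⌊(u - o) / β⌋₊ = Fin.ofNat (N + 1) ⌊(v - o) / β⌋₊) : |u - v| < β := by
  have h1 : ⌊(u - o) / β⌋₊ < N + 1 := (Nat.floor_lt (by positivity)).2 (by exact_mod_cast hu')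
  have h2 : ⌊(v - o) / β⌋₊ < N + 1 := (Nat.floor_lt (by positivity)).2 (by exact_mod_cast hv')
  have h3 : ⌊(u - o) / β⌋₊ = ⌊(v - o) / β⌋₊ := by
    have := congrArg Fin.val h
    simpa [Fin.ofNat, Nat.mod_eq_of_lt h1, Nat.mod_eq_of_lt h2] using this
  have a1 := Nat.floor_le (show 0 ≤ (u - o) / β by positivity)
  have a2 := Nat.lt_floor_add_one ((u - o) / β)
  have a3 := Nat.floor_le (show 0 ≤ (v - o) / β by positivity)
  have a4 := Nat.lt_floor_add_one ((v - o) / β)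
  rw [h3] at a1 a2
  have : |(u - o) / β - (v - o) / β| < 1 := by rw [abs_lt]; constructor <;> linarith
  rwa [← sub_div, sub_sub_sub_cancel_right, abs_div, abs_of_pos hβ, div_lt_one hβ] at this

/-- Rearranging codes within blocks does not increase the dimension. -/
lemma dimH_perm_le {T : ℕ} (hT : 0 < T) (σ : Equiv.Perm ℕ) (hσ : ∀ n, σ n / T = n / T)
    (hω : ∀ n, ω (σ n) = ω' n) :
    dimH (point '' Codes S ω') ≤ dimH (point '' Codes S ω) := by
  obtain ⟨α, θ, hα, hθ1, hαS, hθ⟩ := exists_bounds S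
  have hR : Set.range (fun z : Codes S ω => point z.1) = point '' Codes S ω := by
    rw [Set.image_eq_range]
  have hR' : Set.range (fun z : Codes S ω => point (z.1 ∘ σ)) = point '' Codes S ω' := by
    ext p
    constructor
    · rintro ⟨⟨x, hx⟩, rfl⟩
      exact ⟨x ∘ σ, fun n => (hx (σ n)).trans (hω n), rfl⟩
    · rintro ⟨x, hx, rfl⟩
      refine ⟨⟨x ∘ σ.symm, fun n => ?_⟩, ?_⟩
      · have := hx (σ.symm n)
        rw [← hω, Equiv.apply_symm_apply] at this
        exact this
      · simp [Function.comp_assoc]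
  rw [← hR, ← hR']
  let N : ℕ := ⌊4 / α⌋₊
  have hN : 4 / α < N + 1 := Nat.lt_floor_add_one _
  refine dimH_le_of_classes (ι := Fin (N + 1) × Fin (N + 1)) _ _ (1 / α ^ T) (by positivity) ?_
  intro r hr hr1 U hU
  choose n₁ hn₁ using fun z : Codes S ω => (admissible_h hθ z.1).exists_isStop hθ1 hr
  choose n₂ hn₂ using fun z : Codes S ω => (admissible_v hθ z.1).exists_isStop hθ1 hr
  let p₁ : Codes S ω → ℝ := fun z => leftEnd (fun k => aC (z.1 k)) (fun k => cC (z.1 k)) (n₁ z)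
  let p₂ : Codes S ω → ℝ := fun z => leftEnd (fun k => bC (z.1 k)) (fun k => dC (z.1 k)) (n₂ z)
  have hp₁ : ∀ z, |p₁ z - (point z.1).1| ≤ r := fun z =>
    ((admissible_h hθ z.1).abs_sub_le _).trans (hn₁ z).1
  have hp₂ : ∀ z, |p₂ z - (point z.1).2| ≤ r := fun z =>
    ((admissible_v hθ z.1).abs_sub_le _).trans (hn₂ z).1
  by_cases hne : ∃ z₀ : Codes S ω, point z₀.1 ∈ U
  swap
  · exact ⟨fun _ => (0, 0), fun z _ hz => absurd ⟨z, hz⟩ hne⟩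
  obtain ⟨z₀, hz₀⟩ := hne
  have hβ : 0 < α * r := mul_pos hα hr
  -- The corners of all squares meeting `U` lie in the square of side `4 * r` centred at the point
  -- coded by `z₀`.
  have hwin : ∀ z : Codes S ω, point z.1 ∈ U →
      (0 ≤ p₁ z - ((point z₀.1).1 - 2 * r) ∧
        (p₁ z - ((point z₀.1).1 - 2 * r)) / (α * r) < N + 1) ∧
      (0 ≤ p₂ z - ((point z₀.1).2 - 2 * r) ∧
        (p₂ z - ((point z₀.1).2 - 2 * r)) / (α * r) < N + 1) := by
    intro z hz
    have hd := hU _ hz _ hz₀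
    rw [Prod.dist_eq, Real.dist_eq, Real.dist_eq] at hd
    have d1 := abs_le.1 ((le_max_left _ _).trans hd)
    have d2 := abs_le.1 ((le_max_right _ _).trans hd)
    have q1 := abs_le.1 (hp₁ z)
    have q2 := abs_le.1 (hp₂ z)
    have key : ∀ w : ℝ, w ≤ 4 * r → w / (α * r) < N + 1 := fun w hw => by
      refine lt_of_le_of_lt ?_ hN
      rw [div_le_div_iff₀ hβ hα]
      nlinarith
    exact ⟨⟨by linarith, key _ (by linarith)⟩, ⟨by linarith, key _ (by linarith)⟩⟩
  refine ⟨fun z => (Fin.ofNat (N + 1) ⌊(p₁ z - ((point z₀.1).1 - 2 * r)) / (α * r)⌋₊,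
    Fin.ofNat (N + 1) ⌊(p₂ z - ((point z₀.1).2 - 2 * r)) / (α * r)⌋₊), fun z z' hz hz' hg => ?_⟩
  obtain ⟨hg1, hg2⟩ := Prod.mk.inj hg
  obtain ⟨⟨w1, w2⟩, w3, w4⟩ := hwin z hz
  obtain ⟨⟨w1', w2'⟩, w3', w4'⟩ := hwin z' hz'
  obtain ⟨hrow, hsym⟩ := same_square hα hr hr1 hαS hθ z.2 z'.2 (hn₁ z) (hn₁ z') (hn₂ z) (hn₂ z')
    (abs_sub_lt_of_ofNat_eq hβ w1 w1' w2 w2' hg1) (abs_sub_lt_of_ofNat_eq hβ w3 w3' w4 w4' hg2)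
  exact dist_point_perm hα hθ1 hαS hθ hT σ hσ (hn₁ z) (hn₂ z) hrow hsym

end LGCode

/-- Let `S 1, …, S m` be Lalley–Gatzouras schemes.  If `ω` and `ω'` are
two periodic sequences in `{1,…,m}^ℕ` with the same limit frequencies `(Q 1, …, Q m)`, all
positive and rational, then the limit sets satisfy `dim_H Λ_ω = dim_H Λ_{ω'}`.
Consequently, for every positive rational probability vector `Q`, the quantity
`𝓛(Q) = dim_H Λ_{ω(Q)}` is well defined, independent of the choice of the periodic
sequence `ω(Q)` with frequencies `Q`. -/
theorem statement12 {m : ℕ} (hm : 0 < m) (S : Fin m → LGScheme)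
    (Q : Fin m → ℚ) (hQpos : ∀ k, 0 < Q k) (hQsum : ∑ k, Q k = 1)
    (ω ω' : ℕ → Fin m) (hωper : IsPeriodic ω) (hω'per : IsPeriodic ω')
    (hωfreq : ∀ k, HasLimitFreq ω k (Q k : ℝ)) (hω'freq : ∀ k, HasLimitFreq ω' k (Q k : ℝ))
    (Λ Λ' : Set (ℝ × ℝ)) (hΛ : IsLimitSet S ω Λ) (hΛ' : IsLimitSet S ω' Λ') :
    dimH Λ = dimH Λ' := by
  obtain ⟨T, σ, hT, hσ, hω⟩ := exists_perm hωper hω'per hωfreq hω'freq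
  have hσ' : ∀ n, σ.symm n / T = n / T := fun n => by rw [← hσ, Equiv.apply_symm_apply]
  have hω' : ∀ n, ω' (σ.symm n) = ω n := fun n => by rw [← hω, Equiv.apply_symm_apply]
  rw [LGCode.limitSet_eq hΛ, LGCode.limitSet_eq hΛ']
  exact le_antisymm (LGCode.dimH_perm_le hT σ.symm hσ' hω') (LGCode.dimH_perm_le hT σ hσ hω)
end
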